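/- arXiv:2306.07018 — 2 statements merged into one kernel-verified Lean document; each statement's English description precedes it below -/
import Mathlib

section
/- (Outcome-weighted necessary condition, first difference) Under the IV assumptions (Independence, Relevance, Monotonicity, Exclusion), it holds that ΔE[(D∨ − D2)·Y | Z] = E[Y(1,0); {C1,N2}] − E[Y(1,0); {A1,C2}]. Consequently, if μ({C1,N2}) = μ({A1,C2}) =: p1 > 0, then ΔE[(D∨ − D2)·Y | Z] = (E[Y(1,0) | {C1,N2}] − E[Y(1,0) | {A1,C2}])·p1, which is zero when p1 = 0 or when the two conditional expectations agree. (Proposition 2, eq. (11), from the appendix identity) -/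
open MeasureTheory ProbabilityTheory

noncomputable section

variable {Ω : Type*} [MeasurableSpace Ω]

/-- Observed first-part treatment: `D1 = D1(1)·Z + D1(0)·(1−Z)`. -/
def obsD1 (Z : Ω → ℝ) (D1 : Bool → Ω → ℝ) (ω : Ω) : ℝ :=
  D1 true ω * Z ω + D1 false ω * (1 - Z ω)

/-- Observed second-part treatment. -/
def obsD2 (Z : Ω → ℝ) (D1 : Bool → Ω → ℝ) (D2 : Bool → Bool → Ω → ℝ) (ω : Ω) : ℝ :=
  (D2 true true ω * obsD1 Z D1 ω + D2 true false ω * (1 - obsD1 Z D1 ω)) * Z ω +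
  (D2 false true ω * obsD1 Z D1 ω + D2 false false ω * (1 - obsD1 Z D1 ω)) * (1 - Z ω)

/-- Summary treatment `D∧ = D1·D2`. -/
def obsDand (Z : Ω → ℝ) (D1 : Bool → Ω → ℝ) (D2 : Bool → Bool → Ω → ℝ) (ω : Ω) : ℝ :=
  obsD1 Z D1 ω * obsD2 Z D1 D2 ω

/-- Summary treatment `D∨ = D1 + D2 − D1·D2`. -/
def obsDor (Z : Ω → ℝ) (D1 : Bool → Ω → ℝ) (D2 : Bool → Bool → Ω → ℝ) (ω : Ω) : ℝ :=
  obsD1 Z D1 ω + obsD2 Z D1 D2 ω - obsD1 Z D1 ω * obsD2 Z D1 D2 ω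

/-- Observed outcome `Y = Σ_{d1,d2} Y(Z,d1,d2)·1{D1=d1, D2=d2}`, written out using that the
observed treatments and the instrument are {0,1}-valued. The first index of `Yp` is `z`, the
second is `d1`, the third is `d2`. -/
def obsY (Z : Ω → ℝ) (D1 : Bool → Ω → ℝ) (D2 : Bool → Bool → Ω → ℝ)
    (Yp : Bool → Bool → Bool → Ω → ℝ) (ω : Ω) : ℝ :=
  (Yp true true true ω * obsD1 Z D1 ω * obsD2 Z D1 D2 ω +
   Yp true false true ω * (1 - obsD1 Z D1 ω) * obsD2 Z D1 D2 ω +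
   Yp true true false ω * obsD1 Z D1 ω * (1 - obsD2 Z D1 D2 ω) +
   Yp true false false ω * (1 - obsD1 Z D1 ω) * (1 - obsD2 Z D1 D2 ω)) * Z ω +
  (Yp false true true ω * obsD1 Z D1 ω * obsD2 Z D1 D2 ω +
   Yp false false true ω * (1 - obsD1 Z D1 ω) * obsD2 Z D1 D2 ω +
   Yp false true false ω * obsD1 Z D1 ω * (1 - obsD2 Z D1 D2 ω) +
   Yp false false false ω * (1 - obsD1 Z D1 ω) * (1 - obsD2 Z D1 D2 ω)) * (1 - Z ω)

/-- `ΔE[A|Z] := E[A | Z = 1] − E[A | Z = 0]`, expectations under conditional measures. -/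
def dE (μ : Measure Ω) (Z A : Ω → ℝ) : ℝ :=
  (∫ ω, A ω ∂(μ[|Z ⁻¹' {1}])) - (∫ ω, A ω ∂(μ[|Z ⁻¹' {0}]))

/-- The full-complier event `{C1,C2}`. -/
def CCev (D1 : Bool → Ω → ℝ) (D2 : Bool → Bool → Ω → ℝ) : Set Ω :=
  {ω | D1 true ω - D1 false ω = 1 ∧ D2 true true ω - D2 false false ω = 1}

/-- The mover event `{C1,N2}`. -/
def CNev (D1 : Bool → Ω → ℝ) (D2 : Bool → Bool → Ω → ℝ) : Set Ω :=
  {ω | D1 true ω - D1 false ω = 1 ∧ D2 true true ω = 0 ∧ D2 false false ω = 0}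

/-- The mover event `{C1,A2}`. -/
def CAev (D1 : Bool → Ω → ℝ) (D2 : Bool → Bool → Ω → ℝ) : Set Ω :=
  {ω | D1 true ω - D1 false ω = 1 ∧ D2 true true ω = 1 ∧ D2 false false ω = 1}

/-- The mover event `{N1,C2}`. -/
def NCev (D1 : Bool → Ω → ℝ) (D2 : Bool → Bool → Ω → ℝ) : Set Ω :=
  {ω | D1 true ω = 0 ∧ D1 false ω = 0 ∧ D2 true false ω - D2 false false ω = 1}

/-- The mover event `{A1,C2}`. -/
def ACev (D1 : Bool → Ω → ℝ) (D2 : Bool → Bool → Ω → ℝ) : Set Ω :=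
  {ω | D1 true ω = 1 ∧ D1 false ω = 1 ∧ D2 true true ω - D2 false true ω = 1}

/-!
On `Z = z` the variable `(D∨ − D2)·Y` equals `Y(z,1,0)` where instrument value `z` assigns the
treatments `(1, 0)` and vanishes elsewhere. Independence removes the conditioning on `Z`, so under
exclusion `ΔE` is the difference of the integrals of `Y(1,0)` over the two events on which the
treatments `(1, 0)` are assigned, under `z = 1` and under `z = 0`. Their intersection cancels.
Monotonicity identifies the two set differences with `{C1,N2}` and `{A1,C2}`: a unit leaves `(1, 0)`
when `z` rises to `1` only by taking up the second treatment, and it arrives at `(1, 0)` only from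
`(0, 0)`.
-/

lemma identDistrib_cond_preimage_of_indepFun {α β : Type*} [MeasurableSpace α] [MeasurableSpace β]
    {μ : Measure Ω} [IsFiniteMeasure μ] {X : Ω → α} {Z : Ω → β} {s : Set β}
    (hX : AEMeasurable X μ) (hZ : Measurable Z) (hXZ : IndepFun X Z μ) (hs : MeasurableSet s)
    (hμs : μ (Z ⁻¹' s) ≠ 0) : IdentDistrib X X (μ[|Z ⁻¹' s]) μ where
  aemeasurable_fst := hX.mono_ac cond_absolutelyContinuous
  aemeasurable_snd := hX
  map_eq := by
    ext t ht
    rw [Measure.map_apply_of_aemeasurable (hX.mono_ac cond_absolutelyContinuous) ht,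
      Measure.map_apply_of_aemeasurable hX ht, cond_apply (hZ hs), Set.inter_comm,
      hXZ.measure_inter_preimage_eq_mul t s ht hs, mul_comm,
      ENNReal.mul_inv_cancel_right hμs (measure_ne_top μ _)]

lemma measure_preimage_singleton_ne_zero_of_forall_or {α : Type*} {μ : Measure Ω}
    [IsProbabilityMeasure μ] {Z : Ω → α} {a b : α} (hZ : ∀ ω, Z ω = a ∨ Z ω = b)
    (hb : μ (Z ⁻¹' {b}) < 1) : μ (Z ⁻¹' {a}) ≠ 0 := by
  intro ha
  have hcover : Z ⁻¹' {a} ∪ Z ⁻¹' {b} = Set.univ := Set.eq_univ_of_forall hZ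
  have hle := measure_union_le (μ := μ) (Z ⁻¹' {a}) (Z ⁻¹' {b})
  rw [hcover, measure_univ, ha, zero_add] at hle
  exact hb.not_ge hle

lemma setIntegral_sub_setIntegral_eq_sdiff {E : Type*} [NormedAddCommGroup E] [NormedSpace ℝ E]
    {μ : Measure Ω} {f : Ω → E} {s t : Set Ω} (hs : MeasurableSet s) (ht : MeasurableSet t)
    (hfs : IntegrableOn f s μ) (hft : IntegrableOn f t μ) :
    ∫ ω in s, f ω ∂μ - ∫ ω in t, f ω ∂μ = ∫ ω in s \ t, f ω ∂μ - ∫ ω in t \ s, f ω ∂μ := by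
  rw [← integral_inter_add_sdiff ht hfs, ← integral_inter_add_sdiff hs hft, Set.inter_comm t s,
    add_sub_add_left_eq_sub]

/-- The event `{D1(z) = 1, D2(z, 1) = 0}` that instrument value `z` assigns the treatments `(1, 0)`,
on which `D∨ − D2` takes the value `1` when `Z = z`. As in the potential outcomes, `true` and
`false` encode the instrument values `1` and `0`. -/
def firstOnlyEv (D1 : Bool → Ω → ℝ) (D2 : Bool → Bool → Ω → ℝ) (z : Bool) : Set Ω :=
  {ω | D1 z ω = 1 ∧ D2 z true ω = 0}

section PotentialOutcomes

variable {μ : Measure Ω} {Z : Ω → ℝ} {D1 : Bool → Ω → ℝ} {D2 : Bool → Bool → Ω → ℝ}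
  {Yp : Bool → Bool → Bool → Ω → ℝ}

lemma measurableSet_firstOnlyEv {z : Bool} (hD1 : Measurable (D1 z))
    (hD2 : Measurable (D2 z true)) : MeasurableSet (firstOnlyEv D1 D2 z) :=
  (hD1 (measurableSet_singleton 1)).inter (hD2 (measurableSet_singleton 0))

omit [MeasurableSpace Ω] in
lemma obsDor_sub_obsD2_mul_obsY_eq_indicator {z : Bool} {ω : Ω} (hZ : Z ω = if z then 1 else 0)
    (hD1 : D1 z ω = 0 ∨ D1 z ω = 1) (hD2 : D2 z true ω = 0 ∨ D2 z true ω = 1) :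
    (obsDor Z D1 D2 ω - obsD2 Z D1 D2 ω) * obsY Z D1 D2 Yp ω =
      (firstOnlyEv D1 D2 z).indicator (Yp z true false) ω := by
  cases z <;> rcases hD1 with hD1 | hD1 <;> rcases hD2 with hD2 | hD2 <;>
    simp [obsDor, obsY, obsD2, obsD1, firstOnlyEv, hZ, hD1, hD2]

lemma integral_cond_obsDor_sub_obsD2_mul_obsY [IsFiniteMeasure μ] {z : Bool}
    (hZmeas : Measurable Z) (hD1meas : Measurable (D1 z)) (hD2meas : Measurable (D2 z true))
    (hYmeas : AEMeasurable (Yp z true false) μ)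
    (hZ : μ (Z ⁻¹' {if z then 1 else 0}) ≠ 0)
    (hD1 : ∀ ω, D1 z ω = 0 ∨ D1 z ω = 1) (hD2 : ∀ ω, D2 z true ω = 0 ∨ D2 z true ω = 1)
    (hindep : IndepFun (fun ω => (D1 z ω, D2 z true ω, Yp z true false ω)) Z μ) :
    ∫ ω, (obsDor Z D1 D2 ω - obsD2 Z D1 D2 ω) * obsY Z D1 D2 Yp ω
        ∂(μ[|Z ⁻¹' {if z then 1 else 0}]) =
      ∫ ω in firstOnlyEv D1 D2 z, Yp z true false ω ∂μ := by
  have hlaw := identDistrib_cond_preimage_of_indepFun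
    (hD1meas.aemeasurable.prodMk (hD2meas.aemeasurable.prodMk hYmeas)) hZmeas hindep
    (measurableSet_singleton _) hZ
  have hφ : Measurable ({v : ℝ × ℝ × ℝ | v.1 = 1 ∧ v.2.1 = 0}.indicator fun v => v.2.2) :=
    (by fun_prop : Measurable fun v : ℝ × ℝ × ℝ => v.2.2).indicator (by measurability)
  calc
    _ = ∫ ω, (firstOnlyEv D1 D2 z).indicator (Yp z true false) ω
          ∂(μ[|Z ⁻¹' {if z then 1 else 0}]) := by
      refine integral_congr_ae ?_
      filter_upwards [ae_cond_mem (hZmeas (measurableSet_singleton _))] with ω hω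
      exact obsDor_sub_obsD2_mul_obsY_eq_indicator hω (hD1 ω) (hD2 ω)
    _ = ∫ ω, (firstOnlyEv D1 D2 z).indicator (Yp z true false) ω ∂μ := (hlaw.comp hφ).integral_eq
    _ = _ := integral_indicator (measurableSet_firstOnlyEv hD1meas hD2meas)

lemma firstOnlyEv_true_sdiff_false_ae_eq_CNev (hD1 : ∀ z ω, D1 z ω = 0 ∨ D1 z ω = 1)
    (hD2 : ∀ d ω, D2 false d ω = 0 ∨ D2 false d ω = 1)
    (hmono : ∀ᵐ ω ∂μ,
      D2 false true ω * D1 false ω + D2 false false ω * (1 - D1 false ω) ≤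
        D2 true true ω * D1 true ω + D2 true false ω * (1 - D1 true ω)) :
    (firstOnlyEv D1 D2 true \ firstOnlyEv D1 D2 false : Set Ω) =ᵐ[μ] CNev D1 D2 := by
  refine Filter.Eventually.set_eq ?_
  filter_upwards [hmono] with ω hω
  simp only [firstOnlyEv, CNev, Set.mem_sdiff, Set.mem_ofPred_eq]
  constructor
  · rintro ⟨⟨hD1true, hD2true⟩, hnot⟩
    rcases hD1 false ω with hD1false | hD1false
    · have hle : D2 false false ω ≤ 0 := by simpa [hD1false, hD1true, hD2true] using hω
      have hD2false : D2 false false ω = 0 := by grind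
      exact ⟨by rw [hD1true, hD1false, sub_zero], hD2true, hD2false⟩
    · have hle : D2 false true ω ≤ 0 := by simpa [hD1false, hD1true, hD2true] using hω
      have hD2false : D2 false true ω = 0 := by grind
      exact absurd ⟨hD1false, hD2false⟩ hnot
  · grind

lemma firstOnlyEv_false_sdiff_true_ae_eq_ACev (hD1 : ∀ ω, D1 true ω = 0 ∨ D1 true ω = 1)
    (hD2 : ∀ z ω, D2 z true ω = 0 ∨ D2 z true ω = 1)
    (hmono : ∀ᵐ ω ∂μ, D1 false ω ≤ D1 true ω) :
    (firstOnlyEv D1 D2 false \ firstOnlyEv D1 D2 true : Set Ω) =ᵐ[μ] ACev D1 D2 := by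
  refine Filter.Eventually.set_eq ?_
  filter_upwards [hmono] with ω hω
  simp only [firstOnlyEv, ACev, Set.mem_sdiff, Set.mem_ofPred_eq]
  constructor
  · rintro ⟨⟨hD1false, hD2false⟩, hnot⟩
    have hD1true : D1 true ω = 1 := by grind
    have hD2true : D2 true true ω = 1 := by grind
    exact ⟨hD1true, hD1false, by rw [hD2true, hD2false, sub_zero]⟩
  · grind

theorem stmt_17_general [IsProbabilityMeasure μ]
    (hZmeas : Measurable Z) (hZ1 : μ (Z ⁻¹' {1}) ≠ 0) (hZ0 : μ (Z ⁻¹' {0}) ≠ 0)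
    (hD1meas : ∀ z, Measurable (D1 z)) (hD2meas : ∀ z, Measurable (D2 z true))
    (hYint : ∀ z, Integrable (Yp z true false) μ)
    (hD1 : ∀ z ω, D1 z ω = 0 ∨ D1 z ω = 1) (hD2 : ∀ z d ω, D2 z d ω = 0 ∨ D2 z d ω = 1)
    (hindep : ∀ z, IndepFun (fun ω => (D1 z ω, D2 z true ω, Yp z true false ω)) Z μ)
    (hmono1 : ∀ᵐ ω ∂μ, D1 false ω ≤ D1 true ω)
    (hmono2 : ∀ᵐ ω ∂μ,
      D2 false true ω * D1 false ω + D2 false false ω * (1 - D1 false ω) ≤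
        D2 true true ω * D1 true ω + D2 true false ω * (1 - D1 true ω))
    (hexcl : Yp true true false =ᵐ[μ] Yp false true false) :
    dE μ Z (fun ω => (obsDor Z D1 D2 ω - obsD2 Z D1 D2 ω) * obsY Z D1 D2 Yp ω) =
      (∫ ω in CNev D1 D2, Yp true true false ω ∂μ) -
        (∫ ω in ACev D1 D2, Yp true true false ω ∂μ) ∧
    (μ (CNev D1 D2) = μ (ACev D1 D2) → 0 < μ (CNev D1 D2) →
      dE μ Z (fun ω => (obsDor Z D1 D2 ω - obsD2 Z D1 D2 ω) * obsY Z D1 D2 Yp ω) =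
        ((∫ ω in CNev D1 D2, Yp true true false ω ∂μ) / (μ (CNev D1 D2)).toReal -
          (∫ ω in ACev D1 D2, Yp true true false ω ∂μ) / (μ (ACev D1 D2)).toReal) *
          (μ (CNev D1 D2)).toReal) := by
  have hcond (z : Bool) (hz : μ (Z ⁻¹' {if z then 1 else 0}) ≠ 0) :=
    integral_cond_obsDor_sub_obsD2_mul_obsY hZmeas (hD1meas z) (hD2meas z) (hYint z).aemeasurable
      hz (hD1 z) (hD2 z true) (hindep z)
  have hmeas (z : Bool) : MeasurableSet (firstOnlyEv D1 D2 z) :=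
    measurableSet_firstOnlyEv (hD1meas z) (hD2meas z)
  have hidentity :
      dE μ Z (fun ω => (obsDor Z D1 D2 ω - obsD2 Z D1 D2 ω) * obsY Z D1 D2 Yp ω) =
        ∫ ω in CNev D1 D2, Yp true true false ω ∂μ -
          ∫ ω in ACev D1 D2, Yp true true false ω ∂μ :=
    calc
      _ = ∫ ω in firstOnlyEv D1 D2 true, Yp true true false ω ∂μ -
            ∫ ω in firstOnlyEv D1 D2 false, Yp false true false ω ∂μ :=
        congrArg₂ (· - ·) (hcond true hZ1) (hcond false hZ0)
      _ = ∫ ω in firstOnlyEv D1 D2 true, Yp true true false ω ∂μ -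
            ∫ ω in firstOnlyEv D1 D2 false, Yp true true false ω ∂μ := by
        rw [integral_congr_ae (ae_restrict_of_ae hexcl.symm)]
      _ = _ := by
        rw [setIntegral_sub_setIntegral_eq_sdiff (hmeas true) (hmeas false)
          (hYint true).integrableOn (hYint true).integrableOn,
          setIntegral_congr_set (firstOnlyEv_true_sdiff_false_ae_eq_CNev hD1 (hD2 false) hmono2),
          setIntegral_congr_set
            (firstOnlyEv_false_sdiff_true_ae_eq_ACev (hD1 true) (hD2 · true) hmono1)]
  refine ⟨hidentity, fun hμ hpos => ?_⟩
  have hp : (μ (CNev D1 D2)).toReal ≠ 0 := (ENNReal.toReal_pos hpos.ne' (measure_ne_top μ _)).ne'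
  rw [hidentity, ← hμ, ← sub_div, div_mul_cancel₀ _ hp]

end PotentialOutcomes

theorem stmt_17
    (μ : Measure Ω) [IsProbabilityMeasure μ]
    (Z : Ω → ℝ) (D1 : Bool → Ω → ℝ) (D2 : Bool → Bool → Ω → ℝ)
    (Yp : Bool → Bool → Bool → Ω → ℝ)
    (hZmeas : Measurable Z)
    (hD1meas : ∀ b, Measurable (D1 b))
    (hD2meas : ∀ b b', Measurable (D2 b b'))
    (hYmeas : ∀ z d1 d2, Measurable (Yp z d1 d2))
    (hYint : ∀ z d1 d2, Integrable (Yp z d1 d2) μ)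
    (hZ01 : ∀ ω, Z ω = 0 ∨ Z ω = 1)
    (hZpos : 0 < μ (Z ⁻¹' {1})) (hZlt : μ (Z ⁻¹' {1}) < 1)
    (hD101 : ∀ b ω, D1 b ω = 0 ∨ D1 b ω = 1)
    (hD201 : ∀ b b' ω, D2 b b' ω = 0 ∨ D2 b b' ω = 1)
    (hindep : IndepFun
      (fun ω => ((fun b => D1 b ω), (fun b b' => D2 b b' ω), (fun z d1 d2 => Yp z d1 d2 ω))) Z μ)
    (hrel1 : 0 < dE μ Z (obsD1 Z D1))
    (hrel2 : 0 < dE μ Z (obsD2 Z D1 D2))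
    (hrelAnd : 0 < dE μ Z (obsDand Z D1 D2))
    (hrelOr : 0 < dE μ Z (obsDor Z D1 D2))
    (hmono1 : ∀ᵐ ω ∂μ, D1 false ω ≤ D1 true ω)
    (hmono2 : ∀ᵐ ω ∂μ,
      D2 false true ω * D1 false ω + D2 false false ω * (1 - D1 false ω) ≤
        D2 true true ω * D1 true ω + D2 true false ω * (1 - D1 true ω))
    (hexcl : ∀ d1 d2, ∀ᵐ ω ∂μ, Yp true d1 d2 ω = Yp false d1 d2 ω) :
    dE μ Z (fun ω => (obsDor Z D1 D2 ω - obsD2 Z D1 D2 ω) * obsY Z D1 D2 Yp ω) =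
      (∫ ω in CNev D1 D2, Yp true true false ω ∂μ) -
        (∫ ω in ACev D1 D2, Yp true true false ω ∂μ) ∧
    (μ (CNev D1 D2) = μ (ACev D1 D2) → 0 < μ (CNev D1 D2) →
      dE μ Z (fun ω => (obsDor Z D1 D2 ω - obsD2 Z D1 D2 ω) * obsY Z D1 D2 Yp ω) =
        ((∫ ω in CNev D1 D2, Yp true true false ω ∂μ) / (μ (CNev D1 D2)).toReal -
          (∫ ω in ACev D1 D2, Yp true true false ω ∂μ) / (μ (ACev D1 D2)).toReal) *
          (μ (CNev D1 D2)).toReal) := by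
  exact stmt_17_general hZmeas hZpos.ne'
    (measure_preimage_singleton_ne_zero_of_forall_or hZ01 hZlt) hD1meas (hD2meas · true)
    (hYint · true false) hD101 hD201
    (fun z => hindep.comp (φ := fun v => (v.1 z, v.2.1 z true, v.2.2 z true false))
      (by fun_prop) measurable_id) hmono1 hmono2 (hexcl true false)
end
end

section
/- (Appendix identity for the multivalued first stage) Under the IV assumptions (Independence, Relevance, Monotonicity, Exclusion), the first stage of the multivalued treatment D1 + D2 satisfies ΔE[D1 + D2 | Z] = 2·μ({C1,C2}) + μ({C1,N2}) + μ({C1,A2}) + μ({N1,C2}) + μ({A1,C2}); in particular ΔE[D1 + D2 | Z] > 0. (identity used in the proof of Corollary 4) -/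
open MeasureTheory ProbabilityTheory

noncomputable section

variable {Ω : Type*} [MeasurableSpace Ω]

/-!
Switching the instrument from 0 to 1 moves a monotone binary treatment exactly on its compliers, so
independence makes its first stage the complier share. This applies to `D1(z)` and, composing the
potential treatments, to `D2(z, D1(z))`. The compliers of the former split into `{C1,C2}`,
`{C1,N2}`, `{C1,A2}`, those of the latter into `{C1,C2}`, `{N1,C2}`, `{A1,C2}`; in the sum of the
two first stages the full compliers are counted twice.
-/

section General

variable {μ : Measure Ω}

lemma integrable_cond {E : Type*} [NormedAddCommGroup E] {f : Ω → E} (hf : Integrable f μ)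
    (s : Set Ω) : Integrable f μ[|s] := by
  by_cases hs : μ s = 0
  · simp [cond_eq_zero_of_meas_eq_zero hs]
  · exact hf.restrict.smul_measure (ENNReal.inv_ne_top.2 hs)

lemma integral_cond_preimage_eq_integral_of_indepFun [IsFiniteMeasure μ] {𝓧 𝓩 E : Type*}
    [MeasurableSpace 𝓧] [MeasurableSpace 𝓩] [NormedAddCommGroup E] [NormedSpace ℝ E]
    {X : Ω → 𝓧} {Z : Ω → 𝓩} {f : 𝓧 → E} {t : Set 𝓩} (hXZ : IndepFun X Z μ)
    (hX : AEMeasurable X μ) (hZ : Measurable Z) (hf : AEStronglyMeasurable f (μ.map X))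
    (ht : MeasurableSet t) (hμt : μ (Z ⁻¹' t) ≠ 0) :
    ∫ ω, f (X ω) ∂μ[|Z ⁻¹' t] = ∫ ω, f (X ω) ∂μ := by
  have hset : ∫ ω in Z ⁻¹' t, f (X ω) ∂μ = μ.real (Z ⁻¹' t) • ∫ ω, f (X ω) ∂μ :=
    Indep.setIntegral_eq_smul hZ.comap_le hXZ.symm hX ⟨t, ht, rfl⟩ hf
  have hreal : μ.real (Z ⁻¹' t) ≠ 0 := (measureReal_ne_zero_iff).2 hμt
  rw [ProbabilityTheory.cond, integral_smul_measure, hset, ENNReal.toReal_inv]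
  exact inv_smul_smul₀ hreal _

lemma integrable_of_eq_zero_or_one [IsFiniteMeasure μ] {f : Ω → ℝ}
    (hf : AEStronglyMeasurable f μ) (hf01 : ∀ ω, f ω = 0 ∨ f ω = 1) : Integrable f μ :=
  .of_bound hf 1 <| .of_forall fun ω => by rcases hf01 ω with h | h <;> simp [h]

lemma measureReal_eq_add_add_of_ae_eq_union [IsFiniteMeasure μ] {a r s t : Set Ω}
    (h : a =ᵐ[μ] (r ∪ s ∪ t : Set Ω)) (hs : MeasurableSet s) (ht : MeasurableSet t)
    (hrs : Disjoint r s) (hrt : Disjoint r t) (hst : Disjoint s t) :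
    μ.real a = μ.real r + μ.real s + μ.real t := by
  rw [measureReal_congr h, measureReal_union (hrt.union_left hst) ht, measureReal_union hrs hs]

lemma measure_preimage_zero_ne_zero [IsProbabilityMeasure μ] {Z : Ω → ℝ} (hZ : Measurable Z)
    (hZ01 : ∀ ω, Z ω = 0 ∨ Z ω = 1) (hZlt : μ (Z ⁻¹' {1}) < 1) : μ (Z ⁻¹' {0}) ≠ 0 := by
  have hcompl : Z ⁻¹' {0} = (Z ⁻¹' {1})ᶜ := by
    ext ω
    rcases hZ01 ω with h | h <;> simp [h]
  rw [hcompl, Ne, prob_compl_eq_zero_iff (hZ (measurableSet_singleton 1))]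
  exact hZlt.ne

end General

section Pointwise

omit [MeasurableSpace Ω]

variable {Z : Ω → ℝ} {P D1 : Bool → Ω → ℝ} {D2 : Bool → Bool → Ω → ℝ} {ω : Ω}

/-- The compliers of a binary treatment with potential values `P false` and `P true` under the two
instrument values. -/
def compliers (P : Bool → Ω → ℝ) : Set Ω :=
  {ω | P true ω - P false ω = 1}

lemma eq_zero_and_eq_one_of_mem_compliers (hP01 : ∀ z, P z ω = 0 ∨ P z ω = 1)
    (hω : ω ∈ compliers P) : P false ω = 0 ∧ P true ω = 1 := by
  have hsub : P true ω - P false ω = 1 := hω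
  grind

lemma indicator_compliers_one (hP01 : ∀ z, P z ω = 0 ∨ P z ω = 1)
    (hmono : P false ω ≤ P true ω) :
    (compliers P).indicator 1 ω = P true ω - P false ω := by
  by_cases hω : ω ∈ compliers P
  · rw [Set.indicator_of_mem hω]
    exact hω.symm
  · have hne : P true ω - P false ω ≠ 1 := hω
    rw [Set.indicator_of_notMem hω]
    grind

/-- The potential second treatment `D2(z, D1(z))`, with the first treatment at its potential value
under the same instrument value. -/
def potD2 (D1 : Bool → Ω → ℝ) (D2 : Bool → Bool → Ω → ℝ) (z : Bool) (ω : Ω) : ℝ :=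
  D2 z true ω * D1 z ω + D2 z false ω * (1 - D1 z ω)

lemma potD2_eq_zero_or_one (hD1 : ∀ z, D1 z ω = 0 ∨ D1 z ω = 1)
    (hD2 : ∀ z d, D2 z d ω = 0 ∨ D2 z d ω = 1) (z : Bool) :
    potD2 D1 D2 z ω = 0 ∨ potD2 D1 D2 z ω = 1 := by
  rcases hD1 z with h | h <;> simpa [potD2, h] using hD2 z _

lemma obsD1_of_eq_zero (h : Z ω = 0) : obsD1 Z D1 ω = D1 false ω := by
  simp [obsD1, h]

lemma obsD1_of_eq_one (h : Z ω = 1) : obsD1 Z D1 ω = D1 true ω := by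
  simp [obsD1, h]

lemma obsD2_of_eq_zero (h : Z ω = 0) : obsD2 Z D1 D2 ω = potD2 D1 D2 false ω := by
  simp [obsD2, potD2, obsD1_of_eq_zero, h]

lemma obsD2_of_eq_one (h : Z ω = 1) : obsD2 Z D1 D2 ω = potD2 D1 D2 true ω := by
  simp [obsD2, potD2, obsD1_of_eq_one, h]

lemma mem_compliers_D1_iff (hD101 : ∀ z, D1 z ω = 0 ∨ D1 z ω = 1)
    (hD201 : ∀ z d, D2 z d ω = 0 ∨ D2 z d ω = 1)
    (hmono2 : potD2 D1 D2 false ω ≤ potD2 D1 D2 true ω) :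
    ω ∈ compliers D1 ↔ ω ∈ CCev D1 D2 ∪ CNev D1 D2 ∪ CAev D1 D2 := by
  constructor
  · intro hC1
    obtain ⟨hD1₀, hD1₁⟩ := eq_zero_and_eq_one_of_mem_compliers hD101 hC1
    have hle : D2 false false ω ≤ D2 true true ω := by simpa [potD2, hD1₀, hD1₁] using hmono2
    rcases hD201 false false with h₀ | h₀ <;> rcases hD201 true true with h₁ | h₁
    · exact .inl (.inr ⟨hC1, h₁, h₀⟩)
    · exact .inl (.inl ⟨hC1, by simp [h₀, h₁]⟩)
    · norm_num [h₀, h₁] at hle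
    · exact .inr ⟨hC1, h₁, h₀⟩
  · rintro ((hCC | hCN) | hCA)
    exacts [hCC.1, hCN.1, hCA.1]

lemma mem_compliers_potD2_iff (hD101 : ∀ z, D1 z ω = 0 ∨ D1 z ω = 1)
    (hmono1 : D1 false ω ≤ D1 true ω) :
    ω ∈ compliers (potD2 D1 D2) ↔ ω ∈ CCev D1 D2 ∪ NCev D1 D2 ∪ ACev D1 D2 := by
  rcases hD101 false with h₀ | h₀ <;> rcases hD101 true with h₁ | h₁
  case inr.inl => norm_num [h₀, h₁] at hmono1
  all_goals simp [compliers, potD2, CCev, NCev, ACev, h₀, h₁]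

end Pointwise

section FirstStage

variable {μ : Measure Ω} {Z A B : Ω → ℝ} {P : Bool → Ω → ℝ}

lemma measurableSet_compliers (hP : ∀ z, Measurable (P z)) : MeasurableSet (compliers P) :=
  ((hP true).sub (hP false)) (measurableSet_singleton 1)

lemma dE_add (hA : Integrable A μ) (hB : Integrable B μ) :
    dE μ Z (fun ω => A ω + B ω) = dE μ Z A + dE μ Z B := by
  simp only [dE, integral_add (integrable_cond hA _) (integrable_cond hB _)]
  ring

lemma dE_eq_integral_sub_integral [IsFiniteMeasure μ] (hZ : Measurable Z)
    (hZ0 : μ (Z ⁻¹' {0}) ≠ 0) (hZ1 : μ (Z ⁻¹' {1}) ≠ 0) (hP : ∀ z, Measurable (P z))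
    (hPZ : ∀ z, IndepFun (P z) Z μ) (hA0 : ∀ ω, Z ω = 0 → A ω = P false ω)
    (hA1 : ∀ ω, Z ω = 1 → A ω = P true ω) :
    dE μ Z A = ∫ ω, P true ω ∂μ - ∫ ω, P false ω ∂μ := by
  have hcond (z : Bool) {c : ℝ} (hc : μ (Z ⁻¹' {c}) ≠ 0) (hA : ∀ ω, Z ω = c → A ω = P z ω) :
      ∫ ω, A ω ∂μ[|Z ⁻¹' {c}] = ∫ ω, P z ω ∂μ :=
    (integral_congr_ae <| ae_cond_of_forall_mem (hZ (measurableSet_singleton c)) hA).trans <|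
      integral_cond_preimage_eq_integral_of_indepFun (f := id) (hPZ z) (hP z).aemeasurable hZ
        aestronglyMeasurable_id (measurableSet_singleton c) hc
  rw [dE, hcond true hZ1 hA1, hcond false hZ0 hA0]

lemma integral_sub_integral_eq_measureReal_compliers [IsFiniteMeasure μ]
    (hP : ∀ z, Measurable (P z)) (hP01 : ∀ z ω, P z ω = 0 ∨ P z ω = 1)
    (hmono : ∀ᵐ ω ∂μ, P false ω ≤ P true ω) :
    ∫ ω, P true ω ∂μ - ∫ ω, P false ω ∂μ = μ.real (compliers P) := by
  have hint (z : Bool) : Integrable (P z) μ :=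
    integrable_of_eq_zero_or_one (hP z).aestronglyMeasurable (hP01 z)
  rw [← integral_sub (hint true) (hint false),
    ← integral_indicator_one (measurableSet_compliers hP)]
  refine integral_congr_ae ?_
  filter_upwards [hmono] with ω hω
  exact (indicator_compliers_one (hP01 · ω) hω).symm

lemma dE_eq_measureReal_compliers [IsFiniteMeasure μ] (hZ : Measurable Z)
    (hZ0 : μ (Z ⁻¹' {0}) ≠ 0) (hZ1 : μ (Z ⁻¹' {1}) ≠ 0) (hP : ∀ z, Measurable (P z))
    (hP01 : ∀ z ω, P z ω = 0 ∨ P z ω = 1) (hPZ : ∀ z, IndepFun (P z) Z μ)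
    (hmono : ∀ᵐ ω ∂μ, P false ω ≤ P true ω) (hA0 : ∀ ω, Z ω = 0 → A ω = P false ω)
    (hA1 : ∀ ω, Z ω = 1 → A ω = P true ω) :
    dE μ Z A = μ.real (compliers P) := by
  rw [dE_eq_integral_sub_integral hZ hZ0 hZ1 hP hPZ hA0 hA1,
    integral_sub_integral_eq_measureReal_compliers hP hP01 hmono]

end FirstStage

section Treatments

variable {μ : Measure Ω} {Z : Ω → ℝ} {D1 : Bool → Ω → ℝ} {D2 : Bool → Bool → Ω → ℝ}

lemma measurable_potD2 (hD1 : ∀ z, Measurable (D1 z)) (hD2 : ∀ z d, Measurable (D2 z d))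
    (z : Bool) : Measurable (potD2 D1 D2 z) :=
  ((hD2 z true).mul (hD1 z)).add ((hD2 z false).mul ((hD1 z).const_sub 1))

lemma integrable_obsD1 [IsFiniteMeasure μ] (hZ : Measurable Z) (hD1 : ∀ z, Measurable (D1 z))
    (hZ01 : ∀ ω, Z ω = 0 ∨ Z ω = 1) (hD101 : ∀ z ω, D1 z ω = 0 ∨ D1 z ω = 1) :
    Integrable (obsD1 Z D1) μ := by
  refine integrable_of_eq_zero_or_one (Measurable.aestronglyMeasurable ?_) fun ω => ?_
  · unfold obsD1
    fun_prop
  · rcases hZ01 ω with h | h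
    · simpa only [obsD1_of_eq_zero h] using hD101 false ω
    · simpa only [obsD1_of_eq_one h] using hD101 true ω

lemma integrable_obsD2 [IsFiniteMeasure μ] (hZ : Measurable Z) (hD1 : ∀ z, Measurable (D1 z))
    (hD2 : ∀ z d, Measurable (D2 z d)) (hZ01 : ∀ ω, Z ω = 0 ∨ Z ω = 1)
    (hD101 : ∀ z ω, D1 z ω = 0 ∨ D1 z ω = 1) (hD201 : ∀ z d ω, D2 z d ω = 0 ∨ D2 z d ω = 1) :
    Integrable (obsD2 Z D1 D2) μ := by
  refine integrable_of_eq_zero_or_one (Measurable.aestronglyMeasurable ?_) fun ω => ?_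
  · unfold obsD2 obsD1
    fun_prop
  · rcases hZ01 ω with h | h
    · simpa only [obsD2_of_eq_zero h] using potD2_eq_zero_or_one (hD101 · ω) (hD201 · · ω) false
    · simpa only [obsD2_of_eq_one h] using potD2_eq_zero_or_one (hD101 · ω) (hD201 · · ω) true

lemma measureReal_compliers_D1 [IsFiniteMeasure μ] (hD1 : ∀ z, Measurable (D1 z))
    (hD2 : ∀ z d, Measurable (D2 z d)) (hD101 : ∀ z ω, D1 z ω = 0 ∨ D1 z ω = 1)
    (hD201 : ∀ z d ω, D2 z d ω = 0 ∨ D2 z d ω = 1)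
    (hmono2 : ∀ᵐ ω ∂μ, potD2 D1 D2 false ω ≤ potD2 D1 D2 true ω) :
    μ.real (compliers D1) =
      μ.real (CCev D1 D2) + μ.real (CNev D1 D2) + μ.real (CAev D1 D2) := by
  have hlevel (c : ℝ) (z : Bool) : MeasurableSet {ω | D2 z z ω = c} :=
    hD2 z z (measurableSet_singleton c)
  refine measureReal_eq_add_add_of_ae_eq_union
    (Filter.eventuallyEq_set.2 (hmono2.mono fun ω =>
      mem_compliers_D1_iff (hD101 · ω) (hD201 · · ω)))
    ((measurableSet_compliers hD1).inter ((hlevel 0 true).inter (hlevel 0 false)))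
    ((measurableSet_compliers hD1).inter ((hlevel 1 true).inter (hlevel 1 false))) ?_ ?_ ?_
  all_goals
    refine Set.disjoint_left.2 fun ω h h' => ?_
    grind [CCev, CNev, CAev]

lemma measureReal_compliers_potD2 [IsFiniteMeasure μ] (hD1 : ∀ z, Measurable (D1 z))
    (hD2 : ∀ z d, Measurable (D2 z d)) (hD101 : ∀ z ω, D1 z ω = 0 ∨ D1 z ω = 1)
    (hmono1 : ∀ᵐ ω ∂μ, D1 false ω ≤ D1 true ω) :
    μ.real (compliers (potD2 D1 D2)) =
      μ.real (CCev D1 D2) + μ.real (NCev D1 D2) + μ.real (ACev D1 D2) := by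
  have hlevel (c : ℝ) (z : Bool) : MeasurableSet {ω | D1 z ω = c} :=
    hD1 z (measurableSet_singleton c)
  have hcompliers (d : Bool) : MeasurableSet (compliers fun z => D2 z d) :=
    measurableSet_compliers fun z => hD2 z d
  refine measureReal_eq_add_add_of_ae_eq_union
    (Filter.eventuallyEq_set.2 (hmono1.mono fun ω => mem_compliers_potD2_iff (hD101 · ω)))
    ((hlevel 0 true).inter ((hlevel 0 false).inter (hcompliers false)))
    ((hlevel 1 true).inter ((hlevel 1 false).inter (hcompliers true))) ?_ ?_ ?_
  all_goals
    refine Set.disjoint_left.2 fun ω h h' => ?_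
    grind [CCev, NCev, ACev]

end Treatments

theorem stmt_19_general
    (μ : Measure Ω) [IsProbabilityMeasure μ]
    (Z : Ω → ℝ) (D1 : Bool → Ω → ℝ) (D2 : Bool → Bool → Ω → ℝ)
    (hZmeas : Measurable Z)
    (hD1meas : ∀ b, Measurable (D1 b))
    (hD2meas : ∀ b b', Measurable (D2 b b'))
    (hZ01 : ∀ ω, Z ω = 0 ∨ Z ω = 1)
    (hZpos : 0 < μ (Z ⁻¹' {1})) (hZlt : μ (Z ⁻¹' {1}) < 1)
    (hD101 : ∀ b ω, D1 b ω = 0 ∨ D1 b ω = 1)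
    (hD201 : ∀ b b' ω, D2 b b' ω = 0 ∨ D2 b b' ω = 1)
    (hindep : IndepFun (fun ω => ((fun b => D1 b ω), (fun b b' => D2 b b' ω))) Z μ)
    (hrel : 0 < dE μ Z (obsD1 Z D1))
    (hmono1 : ∀ᵐ ω ∂μ, D1 false ω ≤ D1 true ω)
    (hmono2 : ∀ᵐ ω ∂μ, potD2 D1 D2 false ω ≤ potD2 D1 D2 true ω) :
    dE μ Z (fun ω => obsD1 Z D1 ω + obsD2 Z D1 D2 ω) =
      2 * μ.real (CCev D1 D2) + μ.real (CNev D1 D2) + μ.real (CAev D1 D2) +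
        μ.real (NCev D1 D2) + μ.real (ACev D1 D2) ∧
    0 < dE μ Z (fun ω => obsD1 Z D1 ω + obsD2 Z D1 D2 ω) := by
  have hZ0 : μ (Z ⁻¹' {0}) ≠ 0 := measure_preimage_zero_ne_zero hZmeas hZ01 hZlt
  have hindep1 (z : Bool) : IndepFun (D1 z) Z μ :=
    hindep.comp (φ := fun d : (Bool → ℝ) × (Bool → Bool → ℝ) => d.1 z) (by fun_prop) measurable_id
  have hindep2 (z : Bool) : IndepFun (potD2 D1 D2 z) Z μ :=
    hindep.comp
      (φ := potD2 (fun z (d : (Bool → ℝ) × (Bool → Bool → ℝ)) => d.1 z) (fun z d₁ d => d.2 z d₁) z)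
      (measurable_potD2 (by fun_prop) (by fun_prop) z) measurable_id
  have hdE1 : dE μ Z (obsD1 Z D1) = μ.real (compliers D1) :=
    dE_eq_measureReal_compliers hZmeas hZ0 hZpos.ne' hD1meas hD101 hindep1 hmono1
      (fun _ => obsD1_of_eq_zero) (fun _ => obsD1_of_eq_one)
  have hdE2 : dE μ Z (obsD2 Z D1 D2) = μ.real (compliers (potD2 D1 D2)) :=
    dE_eq_measureReal_compliers hZmeas hZ0 hZpos.ne' (measurable_potD2 hD1meas hD2meas)
      (fun z ω => potD2_eq_zero_or_one (hD101 · ω) (hD201 · · ω) z) hindep2 hmono2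
      (fun _ => obsD2_of_eq_zero) (fun _ => obsD2_of_eq_one)
  rw [dE_add (integrable_obsD1 hZmeas hD1meas hZ01 hD101)
    (integrable_obsD2 hZmeas hD1meas hD2meas hZ01 hD101 hD201)]
  refine ⟨?_, add_pos_of_pos_of_nonneg hrel (hdE2 ▸ measureReal_nonneg)⟩
  rw [hdE1, hdE2, measureReal_compliers_D1 hD1meas hD2meas hD101 hD201 hmono2,
    measureReal_compliers_potD2 hD1meas hD2meas hD101 hmono1]
  ring

theorem stmt_19
    (μ : Measure Ω) [IsProbabilityMeasure μ]
    (Z : Ω → ℝ) (D1 : Bool → Ω → ℝ) (D2 : Bool → Bool → Ω → ℝ)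
    (Yp : Bool → Bool → Bool → Ω → ℝ)
    (hZmeas : Measurable Z)
    (hD1meas : ∀ b, Measurable (D1 b))
    (hD2meas : ∀ b b', Measurable (D2 b b'))
    (hYmeas : ∀ z d1 d2, Measurable (Yp z d1 d2))
    (hYint : ∀ z d1 d2, Integrable (Yp z d1 d2) μ)
    (hZ01 : ∀ ω, Z ω = 0 ∨ Z ω = 1)
    (hZpos : 0 < μ (Z ⁻¹' {1})) (hZlt : μ (Z ⁻¹' {1}) < 1)
    (hD101 : ∀ b ω, D1 b ω = 0 ∨ D1 b ω = 1)
    (hD201 : ∀ b b' ω, D2 b b' ω = 0 ∨ D2 b b' ω = 1)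
    (hindep : IndepFun
      (fun ω => ((fun b => D1 b ω), (fun b b' => D2 b b' ω), (fun z d1 d2 => Yp z d1 d2 ω))) Z μ)
    (hrel1 : 0 < dE μ Z (obsD1 Z D1))
    (hrel2 : 0 < dE μ Z (obsD2 Z D1 D2))
    (hrelAnd : 0 < dE μ Z (obsDand Z D1 D2))
    (hrelOr : 0 < dE μ Z (obsDor Z D1 D2))
    (hmono1 : ∀ᵐ ω ∂μ, D1 false ω ≤ D1 true ω)
    (hmono2 : ∀ᵐ ω ∂μ,
      D2 false true ω * D1 false ω + D2 false false ω * (1 - D1 false ω) ≤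
        D2 true true ω * D1 true ω + D2 true false ω * (1 - D1 true ω))
    (hexcl : ∀ d1 d2, ∀ᵐ ω ∂μ, Yp true d1 d2 ω = Yp false d1 d2 ω) :
    dE μ Z (fun ω => obsD1 Z D1 ω + obsD2 Z D1 D2 ω) =
      2 * (μ (CCev D1 D2)).toReal + (μ (CNev D1 D2)).toReal + (μ (CAev D1 D2)).toReal +
        (μ (NCev D1 D2)).toReal + (μ (ACev D1 D2)).toReal ∧
    0 < dE μ Z (fun ω => obsD1 Z D1 ω + obsD2 Z D1 D2 ω) := by
  exact stmt_19_general μ Z D1 D2 hZmeas hD1meas hD2meas hZ01 hZpos hZlt hD101 hD201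
    (hindep.comp (φ := fun p => (p.1, p.2.1)) (ψ := id) (by fun_prop) measurable_id)
    hrel1 hmono1 hmono2
end
end
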